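/- arXiv:2505.17319 — 2 statements merged into one kernel-verified Lean document; each statement's English description precedes it below -/
import Mathlib

section
/- Let H : ℝ^n × ℝ^n → ℝ and u : ℝ^n → ℝ be continuously differentiable, and let k ∈ ℝ satisfy u(q) < k for all q ∈ ℝ^n. Suppose θ = (Q, P) : ℝ → ℝ^n × ℝ^n solves Hamilton's equations for the Hamiltonian (q,p) ↦ H(q,p) + u(q) and satisfies the energy condition H(Q(t),P(t)) + u(Q(t)) = k for all t. Let σ : ℝ → ℝ be differentiable with σ(0) = 0 and σ'(t) = 1/(k − u(Q(σ(t)))) for all t. Then the reparametrized curve t ↦ θ(σ(t)) solves Hamilton's equations for the Hamiltonian H̃(q,p) := H(q,p)/(k − u(q)), and H̃(Q(σ(t)), P(σ(t))) = 1 for all t (the Maupertuis principle in coordinates). -/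
/-!
On the energy level `H + u = k` the quotient `H / (k - u)` equals `1`, and its differential there is
`(dH + du) / (k - u)`: the momentum part is immediate since `u` does not depend on `p`, and in the
position part the term `H du / (k - u)²` from the quotient rule reduces to `du / (k - u)`. So the
Hamiltonian vector field of `H / (k - u)` along the curve is that of `H + u` scaled by
`1 / (k - u) = σ'`, which is the chain rule factor of the reparametrization.
-/

noncomputable section

/-- A differentiable curve `(Q, P)` solves Hamilton's equations for `K` if
`Q' = ∇ₚ K(Q,P)` and `P' = -∇_q K(Q,P)`. -/
def SolvesHamilton {n : ℕ} (K : EuclideanSpace ℝ (Fin n) × EuclideanSpace ℝ (Fin n) → ℝ)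
    (Q P : ℝ → EuclideanSpace ℝ (Fin n)) : Prop :=
  ∀ t : ℝ,
    HasDerivAt Q (gradient (fun p => K (Q t, p)) (P t)) t ∧
    HasDerivAt P (-gradient (fun q => K (q, P t)) (Q t)) t

/-- The Maupertuis principle in coordinates. -/
theorem maupertuis_principle (n : ℕ)
    (H : EuclideanSpace ℝ (Fin n) × EuclideanSpace ℝ (Fin n) → ℝ)
    (u : EuclideanSpace ℝ (Fin n) → ℝ) (k : ℝ)
    (hH : ContDiff ℝ 1 H) (hu : ContDiff ℝ 1 u)
    (hk : ∀ q, u q < k)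
    (Q P : ℝ → EuclideanSpace ℝ (Fin n))
    (hθ : SolvesHamilton (fun z => H z + u z.1) Q P)
    (hE : ∀ t : ℝ, H (Q t, P t) + u (Q t) = k)
    (σ : ℝ → ℝ) (hσ0 : σ 0 = 0)
    (hσ : ∀ t : ℝ, HasDerivAt σ (1 / (k - u (Q (σ t)))) t) :
    SolvesHamilton (fun z => H z / (k - u z.1))
      (fun t => Q (σ t)) (fun t => P (σ t)) ∧
    ∀ t : ℝ, H (Q (σ t), P (σ t)) / (k - u (Q (σ t))) = 1 := by
  have hw : ∀ q, k - u q ≠ 0 := fun q => (sub_pos.2 (hk q)).ne'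
  have hHd : Differentiable ℝ H := hH.differentiable one_ne_zero
  have hud : Differentiable ℝ u := hu.differentiable one_ne_zero
  have hHk : ∀ t, H (Q t, P t) = k - u (Q t) := fun t => eq_sub_of_add_eq (hE t)
  refine ⟨fun t => ⟨?_, ?_⟩, fun t => by rw [hHk, div_self (hw _)]⟩
  · have hp : HasFDerivAt (fun p => H (Q (σ t), p))
        (fderiv ℝ (fun p => H (Q (σ t), p)) (P (σ t))) (P (σ t)) :=
      DifferentiableAt.hasFDerivAt (by fun_prop)
    have h := (hθ (σ t)).1.scomp t (hσ t)
    refine h.congr_deriv (Eq.symm ?_)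
    simp only [gradient]
    rw [(hp.add_const _).fderiv, ← map_smul]
    simp only [div_eq_mul_inv, one_mul]
    rw [(hp.mul_const _).fderiv]
  · have hq : HasFDerivAt (fun q => H (q, P (σ t)))
        (fderiv ℝ (fun q => H (q, P (σ t))) (Q (σ t))) (Q (σ t)) :=
      DifferentiableAt.hasFDerivAt (by fun_prop)
    have hu' := (hud (Q (σ t))).hasFDerivAt
    have h := (hθ (σ t)).2.scomp t (hσ t)
    refine h.congr_deriv (Eq.symm ?_)
    simp only [gradient]
    rw [(hq.fun_add hu').fderiv, smul_neg, ← map_smul]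
    congr 2
    -- On the energy level `H = k - u`, so the quotient rule collapses to `(dH + du) / (k - u)`.
    refine HasFDerivAt.fderiv ?_
    have hd := hq.mul ((hasDerivAt_inv (hw _)).comp_hasFDerivAt (Q (σ t)) (hu'.const_sub k))
    refine hd.congr_fderiv ?_
    ext v
    simp [hHk]
    have := hw (Q (σ t))
    field_simp
    ring
end
end

section
/- Let H : ℝ^n × ℝ^n → ℝ be continuously differentiable, and let φ : ℝ^n → ℝ^n be a twice continuously differentiable diffeomorphism with Dφ(q) invertible for all q. Define K : ℝ^n × ℝ^n → ℝ by K(q,p) := H(φ(q), (Dφ(q)ᵀ)⁻¹ p). If (Q, P) : ℝ → ℝ^n × ℝ^n solves Hamilton's equations for K, then the curve t ↦ (φ(Q(t)), (Dφ(Q(t))ᵀ)⁻¹ P(t)) solves Hamilton's equations for H. -/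
/-!
Fix a time `t` and write `A q = Dφ(q)ᵀ`, `S q = (A q)⁻¹`, `(q, p) = (Q t, P t)`, `r = S q p`,
`(a, b) = (∇_q H, ∇_p H)(φ q, r)`.

* The chain rule in `p` gives `⟪Q', w⟫ = ⟪b, S q w⟫`. Taking `w = A q y` gives `Dφ(q) Q' = b`, which
  is the first Hamilton equation for `H`.
* Differentiating `A q (S q p) = p` in the direction `v` gives
  `A q ((DS(q) v) p) = -(D²φ(q) v)ᵀ r`. With the chain rule in `q`, this gives
  `⟪P', v⟫ = -⟪a, Dφ(q) v⟫ + ⟪D²φ(q) v Q', r⟫`. The derivative `R'` of `t ↦ S (Q t) (P t)`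
  satisfies `A q R' = -(D²φ(q) Q')ᵀ r + P'`, and by symmetry of `D²φ(q)` the second-order terms
  cancel: `A q R' = -A q a`. Injectivity of `A q` yields the second equation `R' = -a`.
-/

noncomputable section

open scoped InnerProductSpace

/-- The adjoint on `E →L[ℝ] E` as an `ℝ`-linear continuous map; Mathlib's
`ContinuousLinearMap.adjoint` is bundled as conjugate-linear, which does not fit the chain rule. -/
def adjointCLM (E : Type*) [NormedAddCommGroup E] [InnerProductSpace ℝ E] [CompleteSpace E] :
    (E →L[ℝ] E) →L[ℝ] (E →L[ℝ] E) :=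
  LinearMap.mkContinuous
    { toFun := fun T => ContinuousLinearMap.adjoint T
      map_add' := fun T U => map_add _ T U
      map_smul' := fun c T => by simp } 1 (fun T => by simp)

theorem adjointCLM_apply {E : Type*} [NormedAddCommGroup E] [InnerProductSpace ℝ E]
    [CompleteSpace E] (T : E →L[ℝ] E) :
    adjointCLM E T = ContinuousLinearMap.adjoint T := rfl

theorem inner_gradient_eq_fderiv {E : Type*} [NormedAddCommGroup E] [InnerProductSpace ℝ E]
    [CompleteSpace E] (f : E → ℝ) (x v : E) :
    ⟪gradient f x, v⟫_ℝ = fderiv ℝ f x v := by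
  simp [gradient]

theorem exists_equiv_eq_adjoint {E : Type*} [NormedAddCommGroup E] [InnerProductSpace ℝ E]
    [CompleteSpace E] {T : E →L[ℝ] E} (hT : Function.Bijective T) :
    ∃ e : E ≃L[ℝ] E, (e : E →L[ℝ] E) = ContinuousLinearMap.adjoint T := by
  let f : E ≃L[ℝ] E := ContinuousLinearEquiv.ofBijective T
    (LinearMap.ker_eq_bot.2 hT.1) (LinearMap.range_eq_top.2 hT.2)
  have hf : (f : E →L[ℝ] E) = T := by ext; rfl
  refine ⟨ContinuousLinearEquiv.equivOfInverse (ContinuousLinearMap.adjoint T)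
    (ContinuousLinearMap.adjoint (f.symm : E →L[ℝ] E)) ?_ ?_, by ext; rfl⟩
  · intro x
    rw [← ContinuousLinearMap.comp_apply, ← ContinuousLinearMap.adjoint_comp, ← hf]
    simp [ContinuousLinearMap.adjoint_id]
  · intro x
    rw [← ContinuousLinearMap.comp_apply, ← ContinuousLinearMap.adjoint_comp, ← hf]
    simp [ContinuousLinearMap.adjoint_id]

/-- The cotangent lift `Ψ_φ(q,p) = (φ(q), (Dφ(q)ᵀ)⁻¹ p)` of a diffeomorphism `φ`
maps orbits of `K = H ∘ Ψ_φ` to orbits of `H`. -/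
theorem cotangent_lift_maps_orbits (n : ℕ)
    (H : EuclideanSpace ℝ (Fin n) × EuclideanSpace ℝ (Fin n) → ℝ)
    (hH : ContDiff ℝ 1 H)
    (φ : EuclideanSpace ℝ (Fin n) → EuclideanSpace ℝ (Fin n))
    (hφ : ContDiff ℝ 2 φ) (hbij : Function.Bijective φ)
    (hinv : ∀ q, Function.Bijective (fderiv ℝ φ q))
    (Q P : ℝ → EuclideanSpace ℝ (Fin n))
    (hQP : SolvesHamilton
      (fun z => H (φ z.1, (ContinuousLinearMap.adjoint (fderiv ℝ φ z.1)).inverse z.2)) Q P) :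
    SolvesHamilton H (fun t => φ (Q t))
      (fun t => (ContinuousLinearMap.adjoint (fderiv ℝ φ (Q t))).inverse (P t)) := by
  intro t
  obtain ⟨hQ, hP⟩ := hQP t
  simp only at hQ hP ⊢
  set Q' := gradient (fun p => H (φ (Q t),
    (ContinuousLinearMap.adjoint (fderiv ℝ φ (Q t))).inverse p)) (P t) with hQ'
  set G := gradient (fun q => H (φ q,
    (ContinuousLinearMap.adjoint (fderiv ℝ φ q)).inverse (P t))) (Q t) with hG
  set S : EuclideanSpace ℝ (Fin n) → EuclideanSpace ℝ (Fin n) →L[ℝ] EuclideanSpace ℝ (Fin n) :=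
    fun q => (ContinuousLinearMap.adjoint (fderiv ℝ φ q)).inverse with hS
  have hAS : ∀ q x, ContinuousLinearMap.adjoint (fderiv ℝ φ q) (S q x) = x := by
    intro q x
    obtain ⟨e, he⟩ := exists_equiv_eq_adjoint (hinv q)
    simp [hS, ← he]
  have hSA : ∀ q x, S q (ContinuousLinearMap.adjoint (fderiv ℝ φ q) x) = x := by
    intro q x
    obtain ⟨e, he⟩ := exists_equiv_eq_adjoint (hinv q)
    simp [hS, ← he]
  have hφd : HasFDerivAt φ (fderiv ℝ φ (Q t)) (Q t) :=
    (hφ.differentiable (by norm_num) _).hasFDerivAt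
  obtain ⟨D2, hD2⟩ : ∃ D2, HasFDerivAt (fderiv ℝ φ) D2 (Q t) :=
    ⟨_, (((hφ.fderiv_right (m := 1) (by norm_num)).differentiable (by norm_num)) _).hasFDerivAt⟩
  have hsymm : ∀ v w, D2 v w = D2 w v := fun v w =>
    second_derivative_symmetric
      (fun y => (hφ.differentiable (by norm_num) y).hasFDerivAt) hD2 v w
  have hA : HasFDerivAt (fun q => ContinuousLinearMap.adjoint (fderiv ℝ φ q))
      ((adjointCLM _).comp D2) (Q t) :=
    (adjointCLM (EuclideanSpace ℝ (Fin n))).hasFDerivAt.comp (Q t) hD2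
  obtain ⟨S', hS'⟩ : ∃ S', HasFDerivAt S S' (Q t) := by
    obtain ⟨e, he⟩ := exists_equiv_eq_adjoint (hinv (Q t))
    have h1 : ContDiffAt ℝ 1 ContinuousLinearMap.inverse
        (ContinuousLinearMap.adjoint (fderiv ℝ φ (Q t))) := by
      rw [← he]; exact contDiffAt_map_inverse e
    have h2 := HasFDerivAt.comp (Q t) (h1.differentiableAt (by norm_num)).hasFDerivAt hA
    exact ⟨_, h2⟩
  -- the derivative of `q ↦ A q (S q p) = p` vanishes
  have hAS' : ∀ v, ContinuousLinearMap.adjoint (fderiv ℝ φ (Q t)) (S' v (P t)) =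
      -(ContinuousLinearMap.adjoint (D2 v) (S (Q t) (P t))) := by
    intro v
    have h1 := hA.clm_apply (hS'.clm_apply (hasFDerivAt_const (P t) (Q t)))
    have h2 := hasFDerivAt_const (𝕜 := ℝ) (P t) (Q t)
    simp only [hAS] at h1
    have h3 := DFunLike.congr_fun (h1.unique h2) v
    simp [adjointCLM_apply] at h3
    exact eq_neg_of_add_eq_zero_left h3
  set L := fderiv ℝ H (φ (Q t), S (Q t) (P t)) with hL
  have hHd : HasFDerivAt H L (φ (Q t), S (Q t) (P t)) :=
    (hH.differentiable (by norm_num) _).hasFDerivAt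
  have hQin : ∀ w, ⟪Q', w⟫_ℝ = L (0, S (Q t) w) := by
    intro w
    rw [hQ', inner_gradient_eq_fderiv]
    have h := hHd.comp (P t)
      ((hasFDerivAt_const (φ (Q t)) (P t)).prodMk (S (Q t)).hasFDerivAt)
    exact (DFunLike.congr_fun h.fderiv w).trans (by simp)
  have hGin : ∀ v, ⟪G, v⟫_ℝ = L (fderiv ℝ φ (Q t) v, S' v (P t)) := by
    intro v
    rw [hG, inner_gradient_eq_fderiv]
    have h := HasFDerivAt.comp (Q t) hHd
      (hφd.prodMk (hS'.clm_apply (hasFDerivAt_const (P t) (Q t))))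
    exact (DFunLike.congr_fun h.fderiv v).trans (by simp)
  set b := gradient (fun p => H (φ (Q t), p)) (S (Q t) (P t)) with hb
  set a := gradient (fun q => H (q, S (Q t) (P t))) (φ (Q t)) with ha
  have hbin : ∀ w, ⟪b, w⟫_ℝ = L (0, w) := by
    intro w
    rw [hb, inner_gradient_eq_fderiv]
    have h := HasFDerivAt.comp (S (Q t) (P t)) hHd
      ((hasFDerivAt_const (φ (Q t)) (S (Q t) (P t))).prodMk (hasFDerivAt_id _))
    exact (DFunLike.congr_fun h.fderiv w).trans (by simp)
  have hain : ∀ w, ⟪a, w⟫_ℝ = L (w, 0) := by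
    intro w
    rw [ha, inner_gradient_eq_fderiv]
    have h0 := (hasFDerivAt_id (𝕜 := ℝ) (φ (Q t))).prodMk
      (hasFDerivAt_const (S (Q t) (P t)) (φ (Q t)))
    have h := HasFDerivAt.comp (φ (Q t)) (g := H) (g' := L) hHd h0
    exact (DFunLike.congr_fun h.fderiv w).trans (by simp)
  have hbQ : fderiv ℝ φ (Q t) Q' = b := by
    refine ext_inner_right ℝ fun w => ?_
    rw [← ContinuousLinearMap.adjoint_inner_right, hQin, hSA, hbin]
  refine ⟨?_, ?_⟩
  · rw [← hbQ]
    exact hφd.comp_hasDerivAt t hQ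
  · have hR := (hS'.comp_hasDerivAt t hQ).clm_apply hP
    have key : ContinuousLinearMap.adjoint (fderiv ℝ φ (Q t)) (-a) =
        ContinuousLinearMap.adjoint (fderiv ℝ φ (Q t)) (S' Q' (P t) + S (Q t) (-G)) := by
      refine ext_inner_right ℝ fun v => ?_
      have e1 : L (fderiv ℝ φ (Q t) v, S' v (P t)) =
          ⟪a, fderiv ℝ φ (Q t) v⟫_ℝ + ⟪b, S' v (P t)⟫_ℝ := by
        rw [hain, hbin, ← map_add]; simp
      have e2 : ⟪b, S' v (P t)⟫_ℝ = -⟪S (Q t) (P t), D2 Q' v⟫_ℝ := by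
        rw [← hbQ, ← ContinuousLinearMap.adjoint_inner_right, hAS', inner_neg_right,
          ContinuousLinearMap.adjoint_inner_right, hsymm, real_inner_comm]
      rw [map_add, hAS, hAS', inner_add_left, inner_neg_left, inner_neg_left, hGin, e1, e2,
        ContinuousLinearMap.adjoint_inner_left, ContinuousLinearMap.adjoint_inner_left,
        inner_neg_left]
      ring
    have := congrArg (S (Q t)) key
    rw [hSA, hSA] at this
    rw [this]
    exact hR
end
end
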